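/- arXiv:1704.03798 — 6 statements merged into one kernel-verified Lean document; each statement's English description precedes it below -/
import Mathlib

section
/- Every maximal integral curve of the Hamiltonian vector field H_p is defined on all of ℝ; that is, the Hamiltonian flow of p(x,ξ) = ‖ξ‖² + V(x) is complete on ℝⁿ × ℝⁿ. -/
open Filter Set
open scoped Topology RealInnerProductSpace

noncomputable section

/-- The phase space `ℝⁿ × ℝⁿ`. -/
abbrev Phase (n : ℕ) : Type := EuclideanSpace ℝ (Fin n) × EuclideanSpace ℝ (Fin n)

/-- The classical Hamiltonian `p(x, ξ) = ‖ξ‖² + V(x)`. -/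
def ham {n : ℕ} (V : EuclideanSpace ℝ (Fin n) → ℝ) (ρ : Phase n) : ℝ :=
  ‖ρ.2‖ ^ 2 + V ρ.1

/-- The Hamiltonian vector field `H_p(x, ξ) = (2ξ, -∇V(x))`. -/
def hamVF {n : ℕ} (V : EuclideanSpace ℝ (Fin n) → ℝ) (ρ : Phase n) : Phase n :=
  ((2 : ℝ) • ρ.2, -gradient V ρ.1)

/-- `Φ` is the (complete) flow of the Hamiltonian vector field `H_p`:
it starts at the identity, satisfies the group law, and each curve
`t ↦ Φ t ρ` is an integral curve of `H_p`. -/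
def IsHamFlow {n : ℕ} (V : EuclideanSpace ℝ (Fin n) → ℝ)
    (Φ : ℝ → Phase n → Phase n) : Prop :=
  (∀ ρ, Φ 0 ρ = ρ) ∧ (∀ s t ρ, Φ (s + t) ρ = Φ s (Φ t ρ)) ∧
    ∀ ρ t, HasDerivAt (fun s => Φ s ρ) (hamVF V (Φ t ρ)) t

/-- The outgoing tail `Γ₋(E)`: points of the energy surface whose forward
trajectory does not escape to infinity. -/
def GammaMinus {n : ℕ} (V : EuclideanSpace ℝ (Fin n) → ℝ)
    (Φ : ℝ → Phase n → Phase n) (E : ℝ) : Set (Phase n) :=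
  {ρ | ham V ρ = E ∧ ¬ Tendsto (fun t => ‖Φ t ρ‖) atTop atTop}

/-- The incoming tail `Γ₊(E)`: points of the energy surface whose backward
trajectory does not escape to infinity. -/
def GammaPlus {n : ℕ} (V : EuclideanSpace ℝ (Fin n) → ℝ)
    (Φ : ℝ → Phase n → Phase n) (E : ℝ) : Set (Phase n) :=
  {ρ | ham V ρ = E ∧ ¬ Tendsto (fun t => ‖Φ t ρ‖) atBot atTop}

/-- The trapped set `K(E) = Γ₋(E) ∩ Γ₊(E)`. -/
def trappedSet {n : ℕ} (V : EuclideanSpace ℝ (Fin n) → ℝ)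
    (Φ : ℝ → Phase n → Phase n) (E : ℝ) : Set (Phase n) :=
  GammaMinus V Φ E ∩ GammaPlus V Φ E

theorem global_curve {E : Type*} [NormedAddCommGroup E] [NormedSpace ℝ E] [CompleteSpace E]
    (v : E → E) (K : NNReal) (hv : ContDiff ℝ 1 v) (hK : LipschitzWith K v) (x : E) :
    ∃ γ : ℝ → E, γ 0 = x ∧ ∀ t : ℝ, HasDerivAt γ (v (γ t)) t := by
  have hε : (0 : ℝ) < 1 / (1 + K) := by positivity
  have key : ∀ x : E, ∃ γ : ℝ → E, γ 0 = x ∧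
      ∀ t ∈ Ioo (-(1 / (1 + K) : ℝ)) (1 / (1 + K)), HasDerivAt γ (v (γ t)) t := by
    intro x
    have hpl : IsPicardLindelof (fun _ => v) (tmin := -(1 / (1 + K) : ℝ)) (tmax := 1 / (1 + K))
        ⟨0, by constructor <;> linarith⟩ x (‖v x‖₊ + 1) 0 ((1 + K) * (‖v x‖₊ + 1)) K := by
      apply IsPicardLindelof.of_time_independent
      · intro y hy
        have h1 := hK.norm_sub_le y x
        have h2 : ‖y - x‖ ≤ ‖v x‖ + 1 := by simpa [dist_eq_norm] using hy
        have h3 : ‖v y‖ ≤ ‖v y - v x‖ + ‖v x‖ := norm_le_norm_sub_add _ _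
        have h4 : (K : ℝ) * ‖y - x‖ ≤ K * (‖v x‖ + 1) := by gcongr
        push_cast
        nlinarith
      · exact hK.lipschitzOnWith
      · simp only [sub_zero, zero_sub, neg_neg, max_self]
        push_cast
        rw [sub_zero]
        apply le_of_eq
        field_simp
    obtain ⟨α, h0, hα⟩ := hpl.exists_eq_forall_mem_Icc_hasDerivWithinAt₀
    exact ⟨α, h0, fun t ht => (hα t (Ioo_subset_Icc_self ht)).hasDerivAt (Icc_mem_nhds ht.1 ht.2)⟩
  obtain ⟨γ, h0, hγ⟩ := exists_isMIntegralCurve_of_isMIntegralCurveOn (I := modelWithCornersSelf ℝ E)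
    (M := E) (v := v) (contMDiff_vectorSpace_iff_contDiff.mpr hv) hε (fun x => by
      obtain ⟨γ, h0, h⟩ := key x
      exact ⟨γ, h0, fun t ht => (h t ht).hasFDerivAt.hasMFDerivAt.hasMFDerivWithinAt⟩) x
  refine ⟨γ, h0, fun t => ?_⟩
  have h : HasFDerivAt γ ((1 : ℝ →L[ℝ] ℝ).smulRight (v (γ t))) t :=
    hasMFDerivAt_iff_hasFDerivAt.mp (hγ t)
  exact h.hasDerivAt.congr_deriv (by simp)

/-- Every maximal integral curve of the Hamiltonian vector field `H_p` is defined
on all of `ℝ`: through every point there is a global integral curve, and every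
integral curve on an open interval is the restriction of a global one. -/
theorem hamiltonian_flow_complete (n : ℕ) (hn : 1 ≤ n)
    (V : EuclideanSpace ℝ (Fin n) → ℝ) (hV : ContDiff ℝ (⊤ : ℕ∞) V)
    (hVsupp : HasCompactSupport V) :
    (∀ ρ : Phase n, ∃ γ : ℝ → Phase n, γ 0 = ρ ∧
        ∀ t : ℝ, HasDerivAt γ (hamVF V (γ t)) t) ∧
      ∀ (a b : ℝ) (γ : ℝ → Phase n),
        (∀ t ∈ Ioo a b, HasDerivAt γ (hamVF V (γ t)) t) →
          ∃ δ : ℝ → Phase n, (∀ t : ℝ, HasDerivAt δ (hamVF V (δ t)) t) ∧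
            EqOn γ δ (Ioo a b) := by
  have hg : ContDiff ℝ 1 (gradient V) :=
    (InnerProductSpace.toDual ℝ (EuclideanSpace ℝ (Fin n))).symm.contDiff.comp
      (hV.fderiv_right (m := 1) (by norm_cast))
  have hgs : HasCompactSupport (gradient V) :=
    (hVsupp.fderiv (𝕜 := ℝ)).comp_left
      (g := (InnerProductSpace.toDual ℝ (EuclideanSpace ℝ (Fin n))).symm) (map_zero _)
  obtain ⟨C, hC⟩ := hg.lipschitzWith_of_hasCompactSupport hgs one_ne_zero
  have hv : ContDiff ℝ 1 (hamVF V) :=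
    (contDiff_snd.const_smul (2 : ℝ)).prodMk (hg.comp contDiff_fst).neg
  have hL : ∃ K : NNReal, LipschitzWith K (hamVF V) :=
    ⟨_, ((lipschitzWith_smul (2 : ℝ)).comp LipschitzWith.prod_snd).prodMk
      (hC.comp LipschitzWith.prod_fst).neg⟩
  obtain ⟨K, hK⟩ := hL
  have hex := global_curve (hamVF V) K hv hK
  refine ⟨hex, fun a b γ hγ => ?_⟩
  by_cases hab : a < b
  · obtain ⟨t₀, ht₀⟩ := exists_between hab
    obtain ⟨δ, h0, hδ⟩ := hex (γ t₀)
    have hδ' : ∀ t : ℝ, HasDerivAt (fun s => δ (s - t₀)) (hamVF V (δ (t - t₀))) t :=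
      fun t => (hδ (t - t₀)).comp_sub_const t t₀
    refine ⟨fun s => δ (s - t₀), hδ', ?_⟩
    exact ODE_solution_unique_of_mem_Ioo (v := fun _ => hamVF V) (s := fun _ => univ) (K := K)
      (fun t _ => hK.lipschitzOnWith) ht₀ (fun t ht => ⟨hγ t ht, mem_univ _⟩)
      (fun t _ => ⟨hδ' t, mem_univ _⟩) (by simp [h0])
  · obtain ⟨δ, -, hδ⟩ := hex 0
    exact ⟨δ, hδ, by simp [Ioo_eq_empty hab]⟩
end
end

section
/- Escape lemma: let R > 0 be such that supp V ⊆ B(0,R) (the open ball). If (x₀,ξ₀) satisfies ‖x₀‖ ≥ R, ⟨x₀, ξ₀⟩ ≥ 0 and p(x₀,ξ₀) = E with E > 0, then for all t ≥ 0 the trajectory is free, Φ_t(x₀,ξ₀) = (x₀ + 2tξ₀, ξ₀), and ‖x₀ + 2tξ₀‖² = ‖x₀‖² + 4t⟨x₀,ξ₀⟩ + 4t²E; in particular ‖Φ_t(x₀,ξ₀)‖ → ∞ as t → +∞. -/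
open Filter Set
open scoped Topology RealInnerProductSpace

noncomputable section

theorem le_of_sq_le_sq_aux {a b : ℝ} (h : a ^ 2 ≤ b ^ 2) (hb : 0 ≤ b) : a ≤ b :=
  abs_le_of_sq_le_sq' h hb |>.2

theorem hamVF_lipschitz {n : ℕ} (V : EuclideanSpace ℝ (Fin n) → ℝ)
    (hV : ContDiff ℝ (⊤ : ℕ∞) V) (hVsupp : HasCompactSupport V) :
    ∃ K, LipschitzWith K (hamVF V) := by
  have h1 : ContDiff ℝ 1 (fderiv ℝ V) := hV.fderiv_right (by norm_cast)
  obtain ⟨K, hK⟩ := h1.lipschitzWith_of_hasCompactSupport (hVsupp.fderiv ℝ) one_ne_zero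
  have h2 : LipschitzWith (1 * K) (gradient V) :=
    (InnerProductSpace.toDual ℝ (EuclideanSpace ℝ (Fin n))).symm.lipschitz.comp hK
  have h3 : LipschitzWith _ (fun ρ : Phase n => gradient V ρ.1) := h2.comp LipschitzWith.prod_fst
  have h4 : LipschitzWith _ (fun ρ : Phase n => (2:ℝ) • ρ.2) :=
    (lipschitzWith_smul (2:ℝ)).comp LipschitzWith.prod_snd
  exact ⟨_, h4.prodMk h3.neg⟩

/-- Escape lemma: a trajectory starting outside the support of `V`, pointing
outwards, at positive energy `E`, is free for all `t ≥ 0` and escapes to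
infinity. -/
theorem escape_lemma (n : ℕ) (hn : 1 ≤ n)
    (V : EuclideanSpace ℝ (Fin n) → ℝ) (hV : ContDiff ℝ (⊤ : ℕ∞) V)
    (hVsupp : HasCompactSupport V)
    (Φ : ℝ → Phase n → Phase n) (hΦ : IsHamFlow V Φ)
    (R : ℝ) (hR : 0 < R)
    (hsupp : tsupport V ⊆ Metric.ball (0 : EuclideanSpace ℝ (Fin n)) R)
    (E : ℝ) (hE : 0 < E) (x₀ ξ₀ : EuclideanSpace ℝ (Fin n))
    (hx₀ : R ≤ ‖x₀‖) (hout : 0 ≤ ⟪x₀, ξ₀⟫) (hp : ham V (x₀, ξ₀) = E) :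
    (∀ t : ℝ, 0 ≤ t →
        Φ t (x₀, ξ₀) = (x₀ + (2 * t) • ξ₀, ξ₀) ∧
          ‖x₀ + (2 * t) • ξ₀‖ ^ 2
            = ‖x₀‖ ^ 2 + 4 * t * ⟪x₀, ξ₀⟫ + 4 * t ^ 2 * E) ∧
      Tendsto (fun t => ‖Φ t (x₀, ξ₀)‖) atTop atTop := by
  obtain ⟨h0, -, hd⟩ := hΦ
  have hout' : ∀ x : EuclideanSpace ℝ (Fin n), R ≤ ‖x‖ → x ∉ tsupport V := by
    intro x hx hm
    have := hsupp hm
    simp at this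
    linarith
  have hE' : ‖ξ₀‖ ^ 2 = E := by
    have : V x₀ = 0 := image_eq_zero_of_notMem_tsupport (hout' _ hx₀)
    simpa [ham, this] using hp
  have hnorm : ∀ t : ℝ, ‖x₀ + (2 * t) • ξ₀‖ ^ 2
      = ‖x₀‖ ^ 2 + 4 * t * ⟪x₀, ξ₀⟫ + 4 * t ^ 2 * E := by
    intro t
    rw [norm_add_sq_real, norm_smul, mul_pow, hE', inner_smul_right, Real.norm_eq_abs, sq_abs]
    ring
  have hgrad : ∀ t : ℝ, 0 ≤ t → gradient V (x₀ + (2 * t) • ξ₀) = 0 := by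
    intro t ht
    have hR' : R ≤ ‖x₀ + (2 * t) • ξ₀‖ := by
      refine hx₀.trans (le_of_sq_le_sq_aux ?_ (norm_nonneg _))
      rw [hnorm t]
      have : 0 ≤ 4 * t * ⟪x₀, ξ₀⟫ := by positivity
      have : 0 ≤ 4 * t ^ 2 * E := by positivity
      linarith
    have : fderiv ℝ V (x₀ + (2 * t) • ξ₀) = 0 := by
      by_contra hne
      exact hout' _ hR' (support_fderiv_subset ℝ hne)
    simp [gradient, this]
  have hfree : ∀ t : ℝ, 0 ≤ t → Φ t (x₀, ξ₀) = (x₀ + (2 * t) • ξ₀, ξ₀) := by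
    intro T hT
    obtain ⟨K, hK⟩ := hamVF_lipschitz V hV hVsupp
    have hg : ∀ t : ℝ, HasDerivAt (fun t : ℝ => ((x₀ + (2 * t) • ξ₀, ξ₀) : Phase n))
        ((2 : ℝ) • ξ₀, 0) t := by
      intro t
      refine HasDerivAt.prodMk ?_ (hasDerivAt_const _ _)
      have := (((hasDerivAt_id t).const_mul 2).smul_const ξ₀).const_add x₀
      simpa using this
    refine ODE_solution_unique (v := fun _ => hamVF V) (a := 0) (b := T)
      (f := fun t => Φ t (x₀, ξ₀)) (g := fun t => (x₀ + (2 * t) • ξ₀, ξ₀))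
      (fun _ => hK) (fun t _ => (hd _ t).continuousAt.continuousWithinAt)
      (fun t _ => (hd _ t).hasDerivWithinAt)
      (fun t _ => (hg t).continuousAt.continuousWithinAt) ?_ ?_ ⟨hT, le_rfl⟩
    · intro t ht
      have := (hg t).hasDerivWithinAt (s := Ici t)
      simpa [hamVF, hgrad t ht.1] using this
    · simp [h0]
  refine ⟨fun t ht => ⟨hfree t ht, hnorm t⟩, ?_⟩
  have hlin : Tendsto (fun t : ℝ => 2 * ‖ξ₀‖ * t) atTop atTop := by
    have : 0 < ‖ξ₀‖ := by
      by_contra hc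
      have : ‖ξ₀‖ = 0 := le_antisymm (not_lt.1 hc) (norm_nonneg _)
      rw [this] at hE'
      norm_num at hE'
      linarith
    exact tendsto_id.const_mul_atTop (by positivity)
  refine tendsto_atTop_mono' _ ?_ hlin
  filter_upwards [eventually_ge_atTop 0] with t ht
  rw [hfree t ht]
  refine le_trans ?_ (le_max_left _ _ : _ ≤ ‖((x₀ + (2 * t) • ξ₀, ξ₀) : Phase n)‖)
  refine le_of_sq_le_sq_aux ?_ (norm_nonneg _)
  simp only []
  rw [hnorm t]
  have : 0 ≤ 4 * t * ⟪x₀, ξ₀⟫ := by positivity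
  have : 0 ≤ ‖x₀‖ ^ 2 := by positivity
  rw [← hE'] at *
  nlinarith
end
end

section
/- For E > 0, a point of the energy surface is forward-trapped if and only if its forward orbit is bounded: Γ_-(E) = {ρ ∈ p^{-1}(E) : sup_{t ≥ 0} ‖Φ_t(ρ)‖ < ∞}. Symmetrically, Γ_+(E) = {ρ ∈ p^{-1}(E) : sup_{t ≤ 0} ‖Φ_t(ρ)‖ < ∞}. -/
open Filter Set
open scoped Topology RealInnerProductSpace

noncomputable section

theorem aux_mono (f g h : ℝ → ℝ) (M : ℝ) (hf : ∀ t, HasDerivAt f (g t) t)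
    (hg : ∀ t, HasDerivAt g (h t) t) (hh : ∀ t, M < f t → 0 ≤ h t) (c T : ℝ) (hcT : c ≤ T)
    (hM : ∀ t, c ≤ t → t < T → M < f t) :
    f c + g c * (T - c) ≤ f T := by
  have gc : Continuous g := continuous_iff_continuousAt.2 fun t => (hg t).continuousAt
  have fc : Continuous f := continuous_iff_continuousAt.2 fun t => (hf t).continuousAt
  have mg : MonotoneOn g (Icc c T) := by
    apply monotoneOn_of_deriv_nonneg (convex_Icc c T) gc.continuousOn
    · exact fun t _ => (hg t).differentiableAt.differentiableWithinAt
    · intro t ht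
      rw [interior_Icc] at ht
      rw [(hg t).deriv]
      exact hh t (hM t ht.1.le ht.2)
  have hd : ∀ t, HasDerivAt (fun t => f t - g c * t) (g t - g c) t := fun t => by
    have := (hf t).sub ((hasDerivAt_id t).const_mul (g c))
    rw [mul_one] at this
    exact this
  have mf : MonotoneOn (fun t => f t - g c * t) (Icc c T) := by
    apply monotoneOn_of_deriv_nonneg (convex_Icc c T)
    · exact (fc.sub (continuous_const.mul continuous_id)).continuousOn
    · exact fun t _ => (hd t).differentiableAt.differentiableWithinAt
    · intro t ht
      rw [interior_Icc] at ht
      rw [(hd t).deriv]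
      have := mg ⟨le_rfl, hcT⟩ ⟨ht.1.le, ht.2.le⟩ ht.1.le
      linarith
  have := mf ⟨le_rfl, hcT⟩ ⟨hcT, le_rfl⟩ hcT
  simp only at this
  linarith

theorem aux_escape (f g h : ℝ → ℝ) (M : ℝ) (hf : ∀ t, HasDerivAt f (g t) t)
    (hg : ∀ t, HasDerivAt g (h t) t) (hh : ∀ t, M < f t → 0 ≤ h t)
    (hu : ¬ ∃ C, ∀ t, 0 ≤ t → f t ≤ C) : Tendsto f atTop atTop := by
  have fc : Continuous f := continuous_iff_continuousAt.2 fun t => (hf t).continuousAt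
  push Not at hu
  obtain ⟨t1, ht1, hft1⟩ := hu (max M (f 0))
  set N := max M (f 0) with hN
  have hhN : ∀ t, N < f t → 0 ≤ h t := fun t ht => hh t ((le_max_left _ _).trans_lt ht)
  have cS : ∀ a b, IsCompact (Icc a b ∩ {t | f t ≤ N}) := fun a b =>
    isCompact_Icc.inter_right (isClosed_le fc continuous_const)
  obtain ⟨t0, ⟨⟨h00, h01⟩, ht0⟩, hmax⟩ := (cS 0 t1).exists_isGreatest
    ⟨0, ⟨le_rfl, ht1⟩, (le_max_right M (f 0) : f 0 ≤ N)⟩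
  simp only [mem_setOf_eq] at ht0
  have hlt : t0 < t1 := lt_of_le_of_ne h01 (by rintro rfl; linarith)
  obtain ⟨c, hc, hgc⟩ := exists_hasDerivAt_eq_slope f g hlt fc.continuousOn (fun t _ => hf t)
  have hgc0 : 0 < g c := by
    rw [hgc]; exact div_pos (by linarith) (by linarith)
  have hfc : N < f c := by
    by_contra hcon
    have := hmax ⟨⟨h00.trans hc.1.le, hc.2.le⟩, not_lt.1 hcon⟩
    exact absurd hc.1 (not_lt.2 this)
  have key : ∀ t, c ≤ t → N < f t := by
    intro t ht
    by_contra hcon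
    obtain ⟨T, ⟨⟨hT0, hT1⟩, hT⟩, hmin⟩ := (cS c t).exists_isLeast ⟨t, ⟨ht, le_rfl⟩, not_lt.1 hcon⟩
    simp only [mem_setOf_eq] at hT
    have := aux_mono f g h N hf hg hhN c T hT0 (fun s hs hsT => by
      by_contra hcs
      have := hmin ⟨⟨hs, hsT.le.trans hT1⟩, not_lt.1 hcs⟩
      linarith)
    have : 0 ≤ g c * (T - c) := mul_nonneg hgc0.le (by linarith)
    linarith
  have hlin : Tendsto (fun t => f c + g c * (t - c)) atTop atTop :=
    tendsto_atTop_add_const_left _ _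
      ((tendsto_atTop_add_const_right _ (-c) tendsto_id).const_mul_atTop hgc0)
  refine tendsto_atTop_mono' _ ?_ hlin
  filter_upwards [eventually_ge_atTop c] with t ht
  exact aux_mono f g h N hf hg hhN c t ht (fun s hs _ => key s hs)

theorem trapped_iff_bounded_orbit (n : ℕ) (hn : 1 ≤ n)
    (V : EuclideanSpace ℝ (Fin n) → ℝ) (hV : ContDiff ℝ (⊤ : ℕ∞) V)
    (hVsupp : HasCompactSupport V)
    (Φ : ℝ → Phase n → Phase n) (hΦ : IsHamFlow V Φ)
    (E : ℝ) (hE : 0 < E) :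
    GammaMinus V Φ E
        = {ρ : Phase n | ham V ρ = E ∧ ∃ C : ℝ, ∀ t : ℝ, 0 ≤ t → ‖Φ t ρ‖ ≤ C} ∧
      GammaPlus V Φ E
        = {ρ : Phase n | ham V ρ = E ∧ ∃ C : ℝ, ∀ t : ℝ, t ≤ 0 → ‖Φ t ρ‖ ≤ C} := by
  obtain ⟨h0, -, hD⟩ := hΦ
  have hVd : ∀ x, HasGradientAt V (gradient V x) x := fun x =>
    ((hV.differentiable (by simp)) x).hasGradientAt
  have hx : ∀ ρ t, HasDerivAt (fun s => (Φ s ρ).1) ((2 : ℝ) • (Φ t ρ).2) t := fun ρ t =>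
    (hD ρ t).fst
  have hξ : ∀ ρ t, HasDerivAt (fun s => (Φ s ρ).2) (-gradient V (Φ t ρ).1) t := fun ρ t =>
    (hD ρ t).snd
  -- energy conservation
  have hcons : ∀ ρ t, ham V (Φ t ρ) = ham V ρ := by
    intro ρ t
    have hd : ∀ t, HasDerivAt (fun s => ham V (Φ s ρ)) 0 t := by
      intro t
      have h1 := (hξ ρ t).norm_sq
      have h2 := (hVd (Φ t ρ).1).hasFDerivAt.comp_hasDerivAt t (hx ρ t)
      have h3 := h1.add h2
      refine HasDerivAt.congr_deriv (f := fun s => ham V (Φ s ρ)) h3 ?_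
      simp [real_inner_comm, inner_smul_right]
    have := is_const_of_deriv_eq_zero (fun t => (hd t).differentiableAt) (fun t => (hd t).deriv) t 0
    simpa [h0] using this
  obtain ⟨B, hB⟩ := hVsupp.exists_bound_of_continuous hV.continuous
  obtain ⟨R, hR0, hR⟩ : ∃ R : ℝ, 0 ≤ R ∧ ∀ x, R < ‖x‖ → gradient V x = 0 := by
    obtain ⟨R, hR⟩ := hVsupp.isCompact.isBounded.exists_norm_le
    refine ⟨max R 0, le_max_right _ _, fun x hx => ?_⟩
    have hxs : x ∉ tsupport V := fun h => by
      have := hR x h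
      have := le_max_left R 0
      linarith
    have : fderiv ℝ V x = 0 := by
      by_contra hne
      exact hxs (support_fderiv_subset ℝ hne)
    simp [gradient, this]
  have hξb : ∀ ρ t, ‖(Φ t ρ).2‖ ^ 2 ≤ ham V ρ + B := by
    intro ρ t
    have h1 := hcons ρ t
    have h2 := hB (Φ t ρ).1
    rw [Real.norm_eq_abs] at h2
    have := neg_le_of_abs_le h2
    unfold ham at h1 ⊢
    linarith
  have hf : ∀ ρ t, HasDerivAt (fun s => ‖(Φ s ρ).1‖ ^ 2) (4 * inner ℝ (Φ t ρ).1 (Φ t ρ).2) t := by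
    intro ρ t
    have h1 := (hx ρ t).norm_sq
    convert h1 using 1
    rw [inner_smul_right]; ring
  have hg : ∀ ρ t, HasDerivAt (fun s => 4 * inner ℝ (Φ s ρ).1 (Φ s ρ).2)
      (4 * (inner ℝ (Φ t ρ).1 (-gradient V (Φ t ρ).1) + inner ℝ ((2:ℝ) • (Φ t ρ).2) (Φ t ρ).2)) t :=
    fun ρ t => ((hx ρ t).inner ℝ (hξ ρ t)).const_mul 4
  have hh : ∀ ρ t, R ^ 2 < ‖(Φ t ρ).1‖ ^ 2 →
      0 ≤ 4 * (inner ℝ (Φ t ρ).1 (-gradient V (Φ t ρ).1) + inner ℝ ((2:ℝ) • (Φ t ρ).2) (Φ t ρ).2) := by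
    intro ρ t ht
    have : R < ‖(Φ t ρ).1‖ := lt_of_pow_lt_pow_left₀ 2 (norm_nonneg _) ht
    rw [hR _ this, real_inner_smul_left, real_inner_self_eq_norm_sq]
    simp
  -- passing between the squared position and the phase-space norm
  have hbd : ∀ ρ t C, ‖(Φ t ρ).1‖ ^ 2 ≤ C → ‖Φ t ρ‖ ≤ |C| + 1 + (|ham V ρ + B| + 1) := by
    intro ρ t C h
    have h2 := hξb ρ t
    have := le_abs_self C
    have := le_abs_self (ham V ρ + B)
    have := abs_nonneg C
    have := abs_nonneg (ham V ρ + B)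
    rw [Prod.norm_def]
    apply max_le <;> nlinarith [sq_nonneg (‖(Φ t ρ).1‖ - 1), sq_nonneg (‖(Φ t ρ).2‖ - 1)]
  have htend : ∀ ρ (l : Filter ℝ), Tendsto (fun t => ‖(Φ t ρ).1‖ ^ 2) l atTop →
      Tendsto (fun t => ‖Φ t ρ‖) l atTop := by
    intro ρ l h
    rw [tendsto_atTop] at h ⊢
    intro b
    filter_upwards [h (b ^ 2)] with t ht
    exact (abs_le_of_sq_le_sq' ht (norm_nonneg _)).2.trans (norm_fst_le _)
  constructor
  · ext ρ
    refine and_congr_right fun _ => ⟨fun hn => ?_, ?_⟩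
    · by_contra hC
      refine hn (htend ρ _ (aux_escape _ _ _ (R ^ 2) (hf ρ) (hg ρ) (hh ρ) ?_))
      rintro ⟨C, hC'⟩
      exact hC ⟨_, fun t ht => hbd ρ t C (hC' t ht)⟩
    · rintro ⟨C, hC⟩ ht
      obtain ⟨t, h1, h2⟩ := ((ht.eventually_gt_atTop C).and (eventually_ge_atTop 0)).exists
      exact absurd (hC t h2) (not_le.2 h1)
  · ext ρ
    refine and_congr_right fun _ => ⟨fun hn => ?_, ?_⟩
    · by_contra hC
      refine hn (htend ρ _ ?_)
      have key := aux_escape (fun t => ‖(Φ (-t) ρ).1‖ ^ 2)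
        (fun t => -(4 * inner ℝ (Φ (-t) ρ).1 (Φ (-t) ρ).2)) _ (R ^ 2)
        (fun t => by
          have := HasDerivAt.scomp t (hf ρ (-t)) (hasDerivAt_neg t)
          rw [neg_one_smul] at this
          exact this)
        (fun t => by
          have := (HasDerivAt.scomp t (hg ρ (-t)) (hasDerivAt_neg t)).neg
          rw [neg_one_smul, neg_neg] at this
          exact this)
        (fun t => hh ρ (-t)) ?_
      · have := key.comp tendsto_neg_atBot_atTop
        simpa [Function.comp_def] using this
      · rintro ⟨C, hC'⟩
        refine hC ⟨_, fun t ht => hbd ρ t C ?_⟩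
        simpa using hC' (-t) (by linarith)
    · rintro ⟨C, hC⟩ ht
      obtain ⟨t, h1, h2⟩ := ((ht.eventually_gt_atTop C).and (eventually_le_atBot 0)).exists
      exact absurd (hC t h2) (not_le.2 h1)
end
end

section
/- Dichotomy for forward trajectories: for E > 0 and every ρ ∈ p^{-1}(E), either ‖Φ_t(ρ)‖ → ∞ as t → +∞, or the forward orbit {Φ_t(ρ) : t ≥ 0} is bounded. In particular, if ρ ∈ p^{-1}(E) \ Γ_-(E) then ‖Φ_t(ρ)‖ → ∞ as t → +∞. -/
open Filter Set
open scoped Topology RealInnerProductSpace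

noncomputable section

theorem hd_escape_aux {E R : ℝ} (hE : 0 < E) (f g g' : ℝ → ℝ)
    (hf : ∀ t, HasDerivAt f (4 * g t) t) (hg : ∀ t, HasDerivAt g (g' t) t)
    (hg' : ∀ t, R < f t → g' t = 2 * E) (a : ℝ) (ha : R < f a) (hga : 0 ≤ g a) :
    Tendsto f atTop atTop := by
  have hfc : Continuous f := continuous_iff_continuousAt.2 fun t => (hf t).continuousAt
  have hgc : Continuous g := continuous_iff_continuousAt.2 fun t => (hg t).continuousAt
  have key : ∀ s, a ≤ s → (∀ t, a ≤ t → t < s → R < f t) →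
      ∀ t ∈ Icc a s, g a + 2 * E * (t - a) ≤ g t := by
    intro s hs h t ht
    have hm : MonotoneOn (fun t => g t - 2 * E * (t - a)) (Icc a s) := by
      have hd : ∀ t, HasDerivAt (fun t => g t - 2 * E * (t - a)) (g' t - 2 * E * 1) t :=
        fun t => (hg t).sub (((hasDerivAt_id t).sub_const a).const_mul (2 * E))
      refine monotoneOn_of_deriv_nonneg (convex_Icc a s)
        (fun t _ => (hd t).continuousAt.continuousWithinAt)
        (fun t _ => (hd t).differentiableAt.differentiableWithinAt) ?_
      intro t ht
      rw [interior_Icc] at ht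
      rw [(hd t).deriv, hg' t (h t ht.1.le ht.2)]
      linarith
    have := hm (left_mem_Icc.2 hs) ht ht.1
    simp only [sub_self, mul_zero, sub_zero] at this
    linarith
  have key2 : ∀ s, a ≤ s → (∀ t, a ≤ t → t < s → R < f t) →
      f a + 4 * E * (s - a) ^ 2 ≤ f s := by
    intro s hs h
    have hm : MonotoneOn (fun t => f t - 4 * E * (t - a) ^ 2) (Icc a s) := by
      have hd : ∀ t, HasDerivAt (fun t => f t - 4 * E * (t - a) ^ 2)
          (4 * g t - 4 * E * (2 * (t - a))) t := by
        intro t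
        have h2 := (((hasDerivAt_id t).sub_const a).pow 2).const_mul (4 * E)
        refine ((hf t).sub h2).congr_deriv ?_
        simp
      refine monotoneOn_of_deriv_nonneg (convex_Icc a s)
        (fun t _ => (hd t).continuousAt.continuousWithinAt)
        (fun t _ => (hd t).differentiableAt.differentiableWithinAt) ?_
      intro t ht
      rw [interior_Icc] at ht
      rw [(hd t).deriv]
      have := key s hs h t ⟨ht.1.le, ht.2.le⟩
      linarith
    have := hm (left_mem_Icc.2 hs) (right_mem_Icc.2 hs) hs
    simp only [sub_self] at this
    linarith
  have stay : ∀ t, a ≤ t → R < f t := by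
    by_contra! hcon
    obtain ⟨t₀, h1, h2⟩ := hcon
    let S : Set ℝ := {t | a ≤ t ∧ f t ≤ R}
    have hSc : IsClosed S :=
      (isClosed_le continuous_const continuous_id).inter (isClosed_le hfc continuous_const)
    have hSb : BddBelow S := ⟨a, fun t ht => ht.1⟩
    have hmem : sInf S ∈ S := hSc.csInf_mem ⟨t₀, h1, h2⟩ hSb
    have := key2 (sInf S) hmem.1 (by
      intro t ht hts
      by_contra! hc
      exact absurd (csInf_le hSb (show t ∈ S from ⟨ht, hc⟩)) (not_le.2 hts))
    have h3 := hmem.2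
    have : 0 ≤ 4 * E * (sInf S - a) ^ 2 := by positivity
    linarith
  have hlim : Tendsto (fun s : ℝ => f a + 4 * E * (s - a) ^ 2) atTop atTop := by
    refine tendsto_atTop_add_const_left _ _ (Tendsto.const_mul_atTop (by positivity) ?_)
    exact (tendsto_pow_atTop (by norm_num)).comp
      (tendsto_atTop_add_const_right _ (-a) tendsto_id)
  refine tendsto_atTop_mono' _ ?_ hlim
  filter_upwards [eventually_ge_atTop a] with s hs
  exact key2 s hs fun t ht _ => stay t ht

theorem hd_bdd_aux {R : ℝ} (f f' : ℝ → ℝ) (hf : ∀ t, HasDerivAt f (f' t) t)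
    (h : ∀ t, 0 ≤ t → R < f t → f' t < 0) (t : ℝ) (ht : 0 ≤ t) :
    f t ≤ max R (f 0) + 1 := by
  have hfc : Continuous f := continuous_iff_continuousAt.2 fun t => (hf t).continuousAt
  have h0 := le_max_right R (f 0)
  have h1 := le_max_left R (f 0)
  refine image_le_of_deriv_right_lt_deriv_boundary (f := f) (f' := f') (a := 0) (b := t)
    (B := fun _ => max R (f 0) + 1) (B' := fun _ => 0) hfc.continuousOn
    (fun x _ => (hf x).hasDerivWithinAt) (by linarith)
    (fun x => hasDerivAt_const x _) ?_ (right_mem_Icc.2 ht)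
  intro x hx he
  exact h x hx.1 (by rw [he]; linarith)

/-- Dichotomy for forward trajectories at positive energy: either the trajectory
escapes to infinity, or its forward orbit is bounded.  In particular non-trapped
points of the energy surface escape. -/
theorem forward_dichotomy (n : ℕ) (hn : 1 ≤ n)
    (V : EuclideanSpace ℝ (Fin n) → ℝ) (hV : ContDiff ℝ (⊤ : ℕ∞) V)
    (hVsupp : HasCompactSupport V)
    (Φ : ℝ → Phase n → Phase n) (hΦ : IsHamFlow V Φ)
    (E : ℝ) (hE : 0 < E) :
    (∀ ρ : Phase n, ham V ρ = E →
        Tendsto (fun t => ‖Φ t ρ‖) atTop atTop ∨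
          ∃ C : ℝ, ∀ t : ℝ, 0 ≤ t → ‖Φ t ρ‖ ≤ C) ∧
      ∀ ρ : Phase n, ham V ρ = E → ρ ∉ GammaMinus V Φ E →
        Tendsto (fun t => ‖Φ t ρ‖) atTop atTop := by
  have main : ∀ ρ : Phase n, ham V ρ = E →
        Tendsto (fun t => ‖Φ t ρ‖) atTop atTop ∨
          ∃ C : ℝ, ∀ t : ℝ, 0 ≤ t → ‖Φ t ρ‖ ≤ C := by
    intro ρ hρ
    obtain ⟨h0, -, hd⟩ := hΦ
    have hx : ∀ t, HasDerivAt (fun s => (Φ s ρ).1) ((2 : ℝ) • (Φ t ρ).2) t :=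
      fun t => (hd ρ t).fst
    have hξ : ∀ t, HasDerivAt (fun s => (Φ s ρ).2) (-gradient V (Φ t ρ).1) t :=
      fun t => (hd ρ t).snd
    have hVd : Differentiable ℝ V := hV.differentiable (by simp)
    have hgr : ∀ x v, fderiv ℝ V x v = ⟪gradient V x, v⟫ := by
      intro x v
      simp [gradient]
    -- energy conservation
    have hen : ∀ t, ‖(Φ t ρ).2‖ ^ 2 + V (Φ t ρ).1 = E := by
      have hD : ∀ t, HasDerivAt (fun s => ‖(Φ s ρ).2‖ ^ 2 + V (Φ s ρ).1) 0 t := by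
        intro t
        have h1 := (hξ t).norm_sq
        have h2 := (hVd (Φ t ρ).1).hasFDerivAt.comp_hasDerivAt t (hx t)
        refine (h1.add h2).congr_deriv ?_
        rw [hgr, inner_neg_right, inner_smul_right, real_inner_comm]
        ring
      intro t
      have := is_const_of_deriv_eq_zero (fun t => (hD t).differentiableAt)
        (fun t => (hD t).deriv) t 0
      rw [this, h0]
      exact hρ
    obtain ⟨M, hM⟩ := hVsupp.exists_bound_of_continuous hV.continuous
    obtain ⟨R, hRpos, hR⟩ := hVsupp.isCompact.isBounded.subset_closedBall_lt 0 0
    have hout : ∀ x : EuclideanSpace ℝ (Fin n), R ^ 2 < ‖x‖ ^ 2 →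
        V x = 0 ∧ gradient V x = 0 := by
      intro x hx
      have hx' : R < ‖x‖ := lt_of_pow_lt_pow_left₀ 2 (norm_nonneg _) hx
      have hn : x ∉ tsupport V := fun hc => by
        have := hR hc
        rw [mem_closedBall_zero_iff] at this
        linarith
      refine ⟨image_eq_zero_of_notMem_tsupport hn, ?_⟩
      have : fderiv ℝ V x = 0 := by
        by_contra hc
        exact hn (support_fderiv_subset ℝ hc)
      simp [gradient, this]
    have hf : ∀ t, HasDerivAt (fun s => ‖(Φ s ρ).1‖ ^ 2) (4 * ⟪(Φ t ρ).1, (Φ t ρ).2⟫) t := by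
      intro t
      convert (hx t).norm_sq using 1
      rw [inner_smul_right]
      ring
    have hg : ∀ t, HasDerivAt (fun s => ⟪(Φ s ρ).1, (Φ s ρ).2⟫)
        (⟪(Φ t ρ).1, -gradient V (Φ t ρ).1⟫ + ⟪(2 : ℝ) • (Φ t ρ).2, (Φ t ρ).2⟫) t :=
      fun t => (hx t).inner ℝ (hξ t)
    by_cases hc : ∃ t, 0 ≤ t ∧ R ^ 2 < ‖(Φ t ρ).1‖ ^ 2 ∧ 0 ≤ ⟪(Φ t ρ).1, (Φ t ρ).2⟫
    · left
      obtain ⟨a, -, ha, hga⟩ := hc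
      have hl := hd_escape_aux hE _ _ _ hf hg (by
        intro t ht
        obtain ⟨hv, hgv⟩ := hout _ ht
        have := hen t
        rw [hv] at this
        rw [hgv, inner_smul_left, real_inner_self_eq_norm_sq]
        simp
        linarith) a ha hga
      have hl2 := Real.tendsto_sqrt_atTop.comp hl
      refine tendsto_atTop_mono (fun t => ?_) hl2
      simp only [Function.comp, Real.sqrt_sq (norm_nonneg _)]
      exact norm_fst_le _
    · right
      push Not at hc
      have hb := hd_bdd_aux _ _ hf (fun t ht h => by linarith [hc t ht h])
      refine ⟨max (√(max (R ^ 2) (‖(Φ 0 ρ).1‖ ^ 2) + 1)) (√(E + M)), fun t ht => ?_⟩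
      refine max_le_max (Real.le_sqrt_of_sq_le (hb t ht)) (Real.le_sqrt_of_sq_le ?_)
      have h1 := hM (Φ t ρ).1
      have h2 := hen t
      rw [Real.norm_eq_abs] at h1
      linarith [neg_abs_le (V (Φ t ρ).1)]
  refine ⟨main, fun ρ hρ hn' => ?_⟩
  by_contra hc
  exact hn' ⟨hρ, hc⟩
end
end

section
/- For E > 0 and ρ ∈ Γ_-(E), the ω-limit set of ρ under the Hamiltonian flow (the set of limit points of Φ_t(ρ) as t → +∞) is nonempty, compact, invariant under the flow, and contained in the trapped set K(E). Symmetrically, for ρ ∈ Γ_+(E) the α-limit set (limit points as t → -∞) is nonempty, compact, invariant, and contained in K(E). -/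
open Filter Set
open scoped Topology RealInnerProductSpace

noncomputable section

theorem flow_deriv_fst {n : ℕ} {V : EuclideanSpace ℝ (Fin n) → ℝ} {Φ : ℝ → Phase n → Phase n}
    (hΦ : IsHamFlow V Φ) (ρ : Phase n) (t : ℝ) :
    HasDerivAt (fun s => (Φ s ρ).1) ((2 : ℝ) • (Φ t ρ).2) t :=
  (ContinuousLinearMap.fst ℝ (EuclideanSpace ℝ (Fin n))
    (EuclideanSpace ℝ (Fin n))).hasFDerivAt.comp_hasDerivAt t (hΦ.2.2 ρ t)

theorem flow_deriv_snd {n : ℕ} {V : EuclideanSpace ℝ (Fin n) → ℝ} {Φ : ℝ → Phase n → Phase n}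
    (hΦ : IsHamFlow V Φ) (ρ : Phase n) (t : ℝ) :
    HasDerivAt (fun s => (Φ s ρ).2) (-gradient V (Φ t ρ).1) t :=
  (ContinuousLinearMap.snd ℝ (EuclideanSpace ℝ (Fin n))
    (EuclideanSpace ℝ (Fin n))).hasFDerivAt.comp_hasDerivAt t (hΦ.2.2 ρ t)

theorem ham_const {n : ℕ} {V : EuclideanSpace ℝ (Fin n) → ℝ} (hV : Differentiable ℝ V)
    {Φ : ℝ → Phase n → Phase n} (hΦ : IsHamFlow V Φ) (ρ : Phase n) (t : ℝ) :
    ham V (Φ t ρ) = ham V ρ := by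
  have h : ∀ s, HasDerivAt (fun s => ham V (Φ s ρ)) 0 s := by
    intro s
    have h1 := (flow_deriv_snd hΦ ρ s).norm_sq
    have h2 := ((hV (Φ s ρ).1).hasGradientAt.hasFDerivAt).comp_hasDerivAt s (flow_deriv_fst hΦ ρ s)
    have h3 := h1.add h2
    refine HasDerivAt.congr_deriv (f := fun s => ham V (Φ s ρ)) h3 ?_
    simp only [InnerProductSpace.toDual_apply_apply, inner_neg_right, inner_smul_right]
    rw [real_inner_comm]
    ring
  have := is_const_of_deriv_eq_zero (fun s => (h s).differentiableAt) (fun s => (h s).deriv) t 0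
  simpa [hΦ.1 ρ] using this

theorem hamVF_lip {n : ℕ} {V : EuclideanSpace ℝ (Fin n) → ℝ} (hV : ContDiff ℝ (⊤ : ℕ∞) V)
    (hVsupp : HasCompactSupport V) : ∃ K, LipschitzWith K (hamVF V) := by
  have h1 : ContDiff ℝ 1 (fderiv ℝ V) :=
    hV.fderiv_right (m := 1) (WithTop.coe_le_coe.2 le_top)
  obtain ⟨C, hC⟩ := h1.lipschitzWith_of_hasCompactSupport (hVsupp.fderiv ℝ) one_ne_zero
  have h2 : LipschitzWith C (gradient V) := by
    have := (InnerProductSpace.toDual ℝ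
      (EuclideanSpace ℝ (Fin n))).symm.isometry.lipschitz.comp hC
    rw [one_mul] at this
    exact this
  have h3 : LipschitzWith (C * 1) (fun ρ : Phase n => -gradient V ρ.1) :=
    (h2.comp LipschitzWith.prod_fst).neg
  have h4 : LipschitzWith (‖(2 : ℝ)‖₊ * 1) (fun ρ : Phase n => (2 : ℝ) • ρ.2) :=
    (lipschitzWith_smul (2 : ℝ)).comp LipschitzWith.prod_snd
  exact ⟨_, h4.prodMk h3⟩

theorem cont_pos {n : ℕ} {V : EuclideanSpace ℝ (Fin n) → ℝ} (hV : ContDiff ℝ (⊤ : ℕ∞) V)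
    (hVsupp : HasCompactSupport V) {Φ : ℝ → Phase n → Phase n} (hΦ : IsHamFlow V Φ)
    {t : ℝ} (ht : 0 ≤ t) : Continuous (Φ t) := by
  obtain ⟨K, hK⟩ := hamVF_lip hV hVsupp
  have hc : ∀ ρ, Continuous (fun s => Φ s ρ) := fun ρ =>
    continuous_iff_continuousAt.2 fun s => (hΦ.2.2 ρ s).continuousAt
  have : LipschitzWith (Real.exp (K * t)).toNNReal (Φ t) := by
    refine LipschitzWith.of_dist_le_mul fun x y => ?_
    have := dist_le_of_trajectories_ODE (v := fun _ => hamVF V) (fun _ => hK)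
      (hc x).continuousOn (fun s _ => (hΦ.2.2 x s).hasDerivWithinAt)
      (hc y).continuousOn (fun s _ => (hΦ.2.2 y s).hasDerivWithinAt)
      (a := 0) (b := t) (δ := dist x y) (by simp [hΦ.1]) t ⟨ht, le_rfl⟩
    rw [Real.coe_toNNReal _ (Real.exp_pos _).le, mul_comm]
    simpa using this
  exact this.continuous

/-- momentum reversal -/
def flipP {n : ℕ} (ρ : Phase n) : Phase n := (ρ.1, -ρ.2)

theorem flipP_flipP {n : ℕ} (ρ : Phase n) : flipP (flipP ρ) = ρ := by simp [flipP]

theorem norm_flipP {n : ℕ} (ρ : Phase n) : ‖flipP ρ‖ = ‖ρ‖ := by simp [flipP, Prod.norm_def]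

theorem ham_flipP {n : ℕ} (V : EuclideanSpace ℝ (Fin n) → ℝ) (ρ : Phase n) :
    ham V (flipP ρ) = ham V ρ := by simp [flipP, ham]

theorem continuous_flipP {n : ℕ} : Continuous (flipP : Phase n → Phase n) := by
  unfold flipP; fun_prop

def revFlow {n : ℕ} (Φ : ℝ → Phase n → Phase n) (t : ℝ) (ρ : Phase n) : Phase n :=
  flipP (Φ (-t) (flipP ρ))

theorem isHamFlow_rev {n : ℕ} {V : EuclideanSpace ℝ (Fin n) → ℝ} {Φ : ℝ → Phase n → Phase n}
    (hΦ : IsHamFlow V Φ) : IsHamFlow V (revFlow Φ) := by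
  refine ⟨fun ρ => ?_, fun s t ρ => ?_, fun ρ t => ?_⟩
  · simp [revFlow, hΦ.1, flipP_flipP]
  · simp only [revFlow, flipP_flipP]
    rw [neg_add, hΦ.2.1]
  · have h1 := (flow_deriv_fst hΦ (flipP ρ) (-t)).scomp t (hasDerivAt_neg t)
    have h2 := ((flow_deriv_snd hΦ (flipP ρ) (-t)).scomp t (hasDerivAt_neg t)).neg
    refine HasDerivAt.congr_deriv (f := fun s => revFlow Φ s ρ) (h1.prodMk h2) ?_
    simp [hamVF, revFlow, flipP]

theorem cont_all {n : ℕ} {V : EuclideanSpace ℝ (Fin n) → ℝ} (hV : ContDiff ℝ (⊤ : ℕ∞) V)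
    (hVsupp : HasCompactSupport V) {Φ : ℝ → Phase n → Phase n} (hΦ : IsHamFlow V Φ)
    (t : ℝ) : Continuous (Φ t) := by
  rcases le_total 0 t with h | h
  · exact cont_pos hV hVsupp hΦ h
  · have h1 := cont_pos hV hVsupp (isHamFlow_rev hΦ) (t := -t) (by linarith)
    have h2 : Φ t = fun ρ => flipP (revFlow Φ (-t) (flipP ρ)) := by
      funext ρ; simp [revFlow, flipP_flipP]
    rw [h2]
    exact continuous_flipP.comp (h1.comp continuous_flipP)

theorem escape {n : ℕ} {V : EuclideanSpace ℝ (Fin n) → ℝ} (hV : ContDiff ℝ (⊤ : ℕ∞) V)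
    (hVsupp : HasCompactSupport V) {Φ : ℝ → Phase n → Phase n} (hΦ : IsHamFlow V Φ)
    {E R : ℝ} (hE : 0 < E) (hR : ∀ x, R < ‖x‖ ^ 2 → x ∉ tsupport V)
    (ρ : Phase n) (hρ : ham V ρ = E) (h1 : R < ‖ρ.1‖ ^ 2) (h2 : 0 ≤ ⟪ρ.1, ρ.2⟫) :
    Tendsto (fun t => ‖Φ t ρ‖) atTop atTop := by
  obtain ⟨K, hK⟩ := hamVF_lip hV hVsupp
  have hV0 : V ρ.1 = 0 := image_eq_zero_of_notMem_tsupport (hR _ h1)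
  have hξ : ‖ρ.2‖ ^ 2 = E := by simpa [ham, hV0] using hρ
  have hnorm : ∀ t : ℝ, ‖ρ.1 + (2 * t) • ρ.2‖ ^ 2 =
      ‖ρ.1‖ ^ 2 + 4 * t * ⟪ρ.1, ρ.2⟫ + 4 * t ^ 2 * E := by
    intro t
    rw [norm_add_sq_real, inner_smul_right, norm_smul, mul_pow, hξ]
    rw [Real.norm_eq_abs, sq_abs]; ring
  have hc : Continuous (fun s => Φ s ρ) :=
    continuous_iff_continuousAt.2 fun s => (hΦ.2.2 ρ s).continuousAt
  have key : ∀ t, 0 ≤ t → Φ t ρ = (ρ.1 + (2 * t) • ρ.2, ρ.2) := by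
    intro t ht
    have hd : ∀ s ∈ Ico 0 t, HasDerivWithinAt
        (fun s : ℝ => ((ρ.1 + (2 * s) • ρ.2, ρ.2) : Phase n))
        (hamVF V (ρ.1 + (2 * s) • ρ.2, ρ.2)) (Ici s) s := by
      intro s hs
      have hg : gradient V (ρ.1 + (2 * s) • ρ.2) = 0 := by
        rw [gradient, fderiv_of_notMem_tsupport, map_zero]
        apply hR
        rw [hnorm]
        have := mul_nonneg hs.1 h2
        have := mul_nonneg (sq_nonneg s) hE.le
        linarith
      have h3 : HasDerivAt (fun s : ℝ => ρ.1 + (2 * s) • ρ.2) ((2 : ℝ) • ρ.2) s := by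
        have := (((hasDerivAt_id s).const_mul 2).smul_const ρ.2).const_add ρ.1
        simpa using this
      have h4 := h3.prodMk (hasDerivAt_const s ρ.2)
      simp only [hamVF, hg, neg_zero]
      exact h4.hasDerivWithinAt
    have := ODE_solution_unique (v := fun _ => hamVF V) (fun _ => hK)
      hc.continuousOn (fun s _ => (hΦ.2.2 ρ s).hasDerivWithinAt)
      (by fun_prop) hd (by simp [hΦ.1]) (a := 0) (b := t)
    exact this ⟨ht, le_rfl⟩
  have hE' : 0 < Real.sqrt E := Real.sqrt_pos.2 hE
  refine tendsto_atTop_mono' atTop (f₁ := fun t => 2 * Real.sqrt E * t) ?_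
    (tendsto_id.const_mul_atTop (by positivity))
  filter_upwards [eventually_ge_atTop 0] with t ht
  rw [key t ht]
  refine le_trans ?_ (norm_fst_le _)
  refine abs_le_of_sq_le_sq' ?_ (norm_nonneg _) |>.2
  simp only [hnorm]
  have := mul_nonneg ht h2
  have h5 := Real.sq_sqrt hE.le
  have : (2 * √E * t) ^ 2 = 4 * t ^ 2 * E := by
    rw [mul_pow, mul_pow, h5]; ring
  nlinarith [sq_nonneg ‖ρ.1‖]

theorem bounded_fwd {n : ℕ} {V : EuclideanSpace ℝ (Fin n) → ℝ} (hV : ContDiff ℝ (⊤ : ℕ∞) V)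
    (hVsupp : HasCompactSupport V) {Φ : ℝ → Phase n → Phase n} (hΦ : IsHamFlow V Φ)
    {E : ℝ} (hE : 0 < E) (ρ : Phase n) (hρ : ρ ∈ GammaMinus V Φ E) :
    ∃ C : ℝ, ∀ t, 0 ≤ t → ‖Φ t ρ‖ ≤ C := by
  obtain ⟨R, hR0⟩ := (hVsupp : IsCompact (tsupport V)).isBounded.exists_norm_le
  have hR : ∀ x, R ^ 2 < ‖x‖ ^ 2 → x ∉ tsupport V := by
    intro x hx hx'
    have := hR0 x hx'
    nlinarith [norm_nonneg x]
  obtain ⟨B, hB⟩ := hVsupp.exists_bound_of_continuous hV.continuous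
  set M : ℝ := max (‖ρ.1‖ ^ 2) (R ^ 2) + 1 with hM
  have hM1 : ‖ρ.1‖ ^ 2 ≤ M := by have := le_max_left (‖ρ.1‖ ^ 2) (R ^ 2); linarith
  have hM2 : R ^ 2 < M := by have := le_max_right (‖ρ.1‖ ^ 2) (R ^ 2); linarith
  have hd : ∀ t, HasDerivAt (fun s => ‖(Φ s ρ).1‖ ^ 2)
      (2 * ⟪(Φ t ρ).1, (2 : ℝ) • (Φ t ρ).2⟫) t := fun t => (flow_deriv_fst hΦ ρ t).norm_sq
  have hx : ∀ t, 0 ≤ t → ‖(Φ t ρ).1‖ ^ 2 ≤ M := by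
    intro t ht
    refine image_le_of_deriv_right_lt_deriv_boundary (f := fun s => ‖(Φ s ρ).1‖ ^ 2)
      (a := 0) (b := t) (B := fun _ => M) (B' := fun _ => 0)
      (fun s _ => (hd s).continuousAt.continuousWithinAt)
      (fun s _ => (hd s).hasDerivWithinAt) (by simpa [hΦ.1] using hM1)
      (fun s => hasDerivAt_const s M) ?_ ⟨ht, le_rfl⟩
    intro s hs hsM
    by_contra hcon
    apply hρ.2
    have hcon' : 0 ≤ ⟪(Φ s ρ).1, (Φ s ρ).2⟫ := by
      rw [inner_smul_right] at hcon; linarith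
    have := escape hV hVsupp hΦ hE hR (Φ s ρ)
      ((ham_const (hV.differentiable (by simp)) hΦ ρ s).trans hρ.1)
      (by linarith) hcon'
    have h2 := this.comp (tendsto_atTop_add_const_right atTop (-s) tendsto_id)
    refine h2.congr fun u => ?_
    simp [← hΦ.2.1]
  refine ⟨max (√M) (√(E + B)), fun t ht => ?_⟩
  rw [Prod.norm_def]
  refine max_le_max ?_ ?_
  · exact Real.le_sqrt_of_sq_le (hx t ht)
  · refine Real.le_sqrt_of_sq_le ?_
    have h1 : ham V (Φ t ρ) = E := (ham_const (hV.differentiable (by simp)) hΦ ρ t).trans hρ.1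
    have h2 := hB (Φ t ρ).1
    rw [Real.norm_eq_abs, abs_le] at h2
    unfold ham at h1
    linarith

theorem bounded_bwd {n : ℕ} {V : EuclideanSpace ℝ (Fin n) → ℝ} (hV : ContDiff ℝ (⊤ : ℕ∞) V)
    (hVsupp : HasCompactSupport V) {Φ : ℝ → Phase n → Phase n} (hΦ : IsHamFlow V Φ)
    {E : ℝ} (hE : 0 < E) (ρ : Phase n) (hρ : ρ ∈ GammaPlus V Φ E) :
    ∃ C : ℝ, ∀ t, t ≤ 0 → ‖Φ t ρ‖ ≤ C := by
  obtain ⟨C, hC⟩ := bounded_fwd hV hVsupp (isHamFlow_rev hΦ) hE (flipP ρ)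
    ⟨by rw [ham_flipP]; exact hρ.1, fun h => hρ.2 (by
      refine (h.comp tendsto_neg_atBot_atTop).congr fun t => ?_
      simp [revFlow, flipP_flipP, norm_flipP])⟩
  refine ⟨C, fun t ht => ?_⟩
  have := hC (-t) (by linarith)
  simpa [revFlow, flipP_flipP, norm_flipP] using this

theorem limit_aux {n : ℕ} {V : EuclideanSpace ℝ (Fin n) → ℝ} (hV : ContDiff ℝ (⊤ : ℕ∞) V)
    (hVsupp : HasCompactSupport V) {Φ : ℝ → Phase n → Phase n} (hΦ : IsHamFlow V Φ)
    {E : ℝ} (f : Filter ℝ) [f.NeBot] (hf : ∀ t : ℝ, Tendsto (t + ·) f f)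
    (ρ : Phase n) (hρ : ham V ρ = E) (C : ℝ) (hC : ∀ᶠ t in f, ‖Φ t ρ‖ ≤ C) :
    (omegaLimit f Φ {ρ}).Nonempty ∧
          IsCompact (omegaLimit f Φ {ρ}) ∧
            (∀ t : ℝ, Φ t '' omegaLimit f Φ {ρ} = omegaLimit f Φ {ρ}) ∧
              omegaLimit f Φ {ρ} ⊆ trappedSet V Φ E := by
  have hK : IsCompact (Metric.closedBall (0 : Phase n) C) := isCompact_closedBall _ _
  have hsub : omegaLimit f Φ {ρ} ⊆ Metric.closedBall (0 : Phase n) C := by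
    refine fun σ hσ => closure_minimal ?_ Metric.isClosed_closedBall (mem_iInter₂.1 hσ _ hC)
    rintro _ ⟨t, ht, x, rfl, rfl⟩
    simpa using ht
  have hmaps : ∀ t, MapsTo (Φ t) (omegaLimit f Φ {ρ}) (omegaLimit f Φ {ρ}) := by
    intro t
    refine MapsTo.mono_right ?_ (omegaLimit_subset_of_tendsto Φ {ρ} (hf t))
    exact mapsTo_omegaLimit _ (mapsTo_id _) (fun t' x => (hΦ.2.1 _ _ _).symm)
      (cont_all hV hVsupp hΦ t)
  have hbdd : ∀ σ ∈ omegaLimit f Φ {ρ}, ∀ t, ‖Φ t σ‖ ≤ C := fun σ hσ t => by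
    simpa using hsub (hmaps t hσ)
  refine ⟨?_, hK.of_isClosed_subset (isClosed_omegaLimit _ _ _) hsub, fun t => ?_, fun σ hσ => ?_⟩
  · refine nonempty_omegaLimit_of_isCompact_absorbing _ _ _ hK ⟨_, hC, ?_⟩ (singleton_nonempty _)
    refine closure_minimal ?_ Metric.isClosed_closedBall
    rintro _ ⟨t, ht, x, rfl, rfl⟩
    simpa using ht
  · refine (hmaps t).image_subset.antisymm fun σ hσ => ⟨Φ (-t) σ, hmaps _ hσ, ?_⟩
    rw [← hΦ.2.1, add_neg_cancel, hΦ.1]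
  · have hcl : IsClosed {σ : Phase n | ham V σ = E} := by
      refine isClosed_eq ?_ continuous_const
      have := hV.continuous
      unfold ham; fun_prop
    have hE' : ham V σ = E := by
      have : omegaLimit f Φ {ρ} ⊆ {σ : Phase n | ham V σ = E} := by
        refine fun σ hσ => closure_minimal ?_ hcl (mem_iInter₂.1 hσ _ univ_mem)
        rintro _ ⟨t, ht, x, rfl, rfl⟩
        exact (ham_const (hV.differentiable (by simp)) hΦ _ t).trans hρ
      exact this hσ
    refine ⟨⟨hE', fun h => ?_⟩, ⟨hE', fun h => ?_⟩⟩
    all_goals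
      obtain ⟨t, ht⟩ := (h.eventually_gt_atTop C).exists
      exact absurd (hbdd σ hσ t) (not_le.2 ht)

/-- The ω-limit set of a forward-trapped point is nonempty, compact, flow
invariant and contained in the trapped set; symmetrically for the α-limit set
of a backward-trapped point. -/
theorem limit_sets_in_trappedSet (n : ℕ) (hn : 1 ≤ n)
    (V : EuclideanSpace ℝ (Fin n) → ℝ) (hV : ContDiff ℝ (⊤ : ℕ∞) V)
    (hVsupp : HasCompactSupport V)
    (Φ : ℝ → Phase n → Phase n) (hΦ : IsHamFlow V Φ)
    (E : ℝ) (hE : 0 < E) :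
    (∀ ρ ∈ GammaMinus V Φ E,
        (omegaLimit atTop Φ {ρ}).Nonempty ∧
          IsCompact (omegaLimit atTop Φ {ρ}) ∧
            (∀ t : ℝ, Φ t '' omegaLimit atTop Φ {ρ} = omegaLimit atTop Φ {ρ}) ∧
              omegaLimit atTop Φ {ρ} ⊆ trappedSet V Φ E) ∧
      ∀ ρ ∈ GammaPlus V Φ E,
        (omegaLimit atBot Φ {ρ}).Nonempty ∧
          IsCompact (omegaLimit atBot Φ {ρ}) ∧
            (∀ t : ℝ, Φ t '' omegaLimit atBot Φ {ρ} = omegaLimit atBot Φ {ρ}) ∧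
              omegaLimit atBot Φ {ρ} ⊆ trappedSet V Φ E := by
  refine ⟨fun ρ hρ => ?_, fun ρ hρ => ?_⟩
  · obtain ⟨C, hC⟩ := bounded_fwd hV hVsupp hΦ hE ρ hρ
    exact limit_aux hV hVsupp hΦ atTop (fun t => tendsto_atTop_add_const_left _ t tendsto_id)
      ρ hρ.1 C ((eventually_ge_atTop 0).mono hC)
  · obtain ⟨C, hC⟩ := bounded_bwd hV hVsupp hΦ hE ρ hρ
    exact limit_aux hV hVsupp hΦ atBot (fun t => tendsto_atBot_add_const_left _ t tendsto_id)
      ρ hρ.1 C ((eventually_le_atBot 0).mono hC)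
end
end

section
/- Non-trapping consistency: for E > 0, if the trapped set is empty, K(E) = ∅, then both tails are empty: Γ_-(E) = ∅ and Γ_+(E) = ∅. -/
open Filter Set
open scoped Topology RealInnerProductSpace

noncomputable section

section helpers

variable {n : ℕ} {V : EuclideanSpace ℝ (Fin n) → ℝ} {Φ : ℝ → Phase n → Phase n}

lemma aux_fst {f : ℝ → Phase n} {f' : Phase n} {t : ℝ} (h : HasDerivAt f f' t) :
    HasDerivAt (fun s => (f s).1) f'.1 t := by
  exact (hasFDerivAt_fst (𝕜 := ℝ) (p := f t)).comp_hasDerivAt t h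

lemma aux_snd {f : ℝ → Phase n} {f' : Phase n} {t : ℝ} (h : HasDerivAt f f' t) :
    HasDerivAt (fun s => (f s).2) f'.2 t := by
  exact (hasFDerivAt_snd (𝕜 := ℝ) (p := f t)).comp_hasDerivAt t h

lemma aux_grad_cd (hV : ContDiff ℝ (⊤ : ℕ∞) V) : ContDiff ℝ 1 (gradient V) := by
  have h : ContDiff ℝ 1 (fderiv ℝ V) := hV.fderiv_right (WithTop.coe_le_coe.mpr (le_top : (1 + 1 : ℕ∞) ≤ ⊤))
  exact (InnerProductSpace.toDual ℝ (EuclideanSpace ℝ (Fin n))).symm.contDiff.comp h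

lemma aux_grad_cs (hs : HasCompactSupport V) : HasCompactSupport (gradient V) := by
  have h : HasCompactSupport (fderiv ℝ V) := hs.fderiv ℝ
  exact h.comp_left
    (g := (InnerProductSpace.toDual ℝ (EuclideanSpace ℝ (Fin n))).symm) (map_zero _)

lemma aux_lip (hV : ContDiff ℝ (⊤ : ℕ∞) V) (hs : HasCompactSupport V) :
    ∃ K, LipschitzWith K (hamVF V) := by
  obtain ⟨C, hC⟩ := ContDiff.lipschitzWith_of_hasCompactSupport (𝕂 := ℝ)
    (aux_grad_cs hs) (aux_grad_cd hV) one_ne_zero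
  have h1 := (lipschitzWith_smul (2 : ℝ) (β := EuclideanSpace ℝ (Fin n))).comp
    (LipschitzWith.prod_snd (α := EuclideanSpace ℝ (Fin n)) (β := EuclideanSpace ℝ (Fin n)))
  have h2 := (hC.comp (LipschitzWith.prod_fst (α := EuclideanSpace ℝ (Fin n))
    (β := EuclideanSpace ℝ (Fin n)))).neg
  exact ⟨_, h1.prodMk h2⟩

lemma aux_R (hs : HasCompactSupport V) :
    ∃ R : ℝ, ∀ x, R < ‖x‖ → gradient V x = 0 := by
  obtain ⟨R, hR⟩ := (aux_grad_cs hs).isCompact.isBounded.exists_norm_le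
  refine ⟨R, fun x hx => ?_⟩
  by_contra h
  exact absurd (hR x (subset_tsupport _ h)) (not_le.mpr hx)

lemma aux_cont (hV : ContDiff ℝ (⊤ : ℕ∞) V) (hs : HasCompactSupport V)
    (hΦ : IsHamFlow V Φ) {t : ℝ} (ht : 0 ≤ t) : Continuous (Φ t) := by
  obtain ⟨K, hK⟩ := aux_lip hV hs
  have hd := hΦ.2.2
  have : LipschitzWith (Real.toNNReal (Real.exp (K * (t - 0)))) (Φ t) := by
    refine LipschitzWith.of_dist_le_mul fun x y => ?_
    have := dist_le_of_trajectories_ODE (v := fun _ => hamVF V) (K := K)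
      (f := fun s => Φ s x) (g := fun s => Φ s y) (a := 0) (b := t) (δ := dist x y)
      (fun _ => hK) (fun s _ => (hd x s).continuousAt.continuousWithinAt)
      (fun s _ => (hd x s).hasDerivWithinAt)
      (fun s _ => (hd y s).continuousAt.continuousWithinAt)
      (fun s _ => (hd y s).hasDerivWithinAt) (by simp [hΦ.1]) t ⟨ht, le_rfl⟩
    rw [Real.coe_toNNReal _ (Real.exp_pos _).le, mul_comm]
    exact this
  exact this.continuous

/-- momentum reversal -/
def auxFlip (ρ : Phase n) : Phase n := (ρ.1, -ρ.2)

lemma auxFlip_flip (ρ : Phase n) : auxFlip (auxFlip ρ) = ρ := by simp [auxFlip]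

lemma auxFlip_norm (ρ : Phase n) : ‖auxFlip ρ‖ = ‖ρ‖ := by simp [auxFlip, Prod.norm_def]

lemma auxFlip_ham (ρ : Phase n) : ham V (auxFlip ρ) = ham V ρ := by simp [auxFlip, ham]

lemma auxFlip_cont : Continuous (auxFlip : Phase n → Phase n) := by
  unfold auxFlip; fun_prop

/-- reversed flow -/
def auxRev (Φ : ℝ → Phase n → Phase n) : ℝ → Phase n → Phase n :=
  fun t ρ => auxFlip (Φ (-t) (auxFlip ρ))

lemma auxRev_flow (hΦ : IsHamFlow V Φ) : IsHamFlow V (auxRev Φ) := by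
  obtain ⟨h0, ha, hd⟩ := hΦ
  refine ⟨fun ρ => ?_, fun s t ρ => ?_, fun ρ t => ?_⟩
  · simp [auxRev, h0, auxFlip_flip]
  · simp only [auxRev, auxFlip_flip]
    rw [neg_add, ha]
  · have h := (hd (auxFlip ρ) (-t)).scomp t (hasDerivAt_neg t)
    have h1 := aux_fst h
    have h2 := (aux_snd h).neg
    have := h1.prodMk h2
    refine this.congr_deriv ?_
    simp [hamVF, auxRev, auxFlip]

lemma aux_energy (hV : ContDiff ℝ (⊤ : ℕ∞) V) (hΦ : IsHamFlow V Φ) (ρ : Phase n) (t : ℝ) :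
    ham V (Φ t ρ) = ham V ρ := by
  have hd : ∀ t, HasDerivAt (fun s => ham V (Φ s ρ)) 0 t := by
    intro t
    have h := hΦ.2.2 ρ t
    have h1 := (aux_snd h).norm_sq
    have hg : HasFDerivAt V _ (Φ t ρ).1 :=
      ((hV.differentiable (by simp)) (Φ t ρ).1).hasGradientAt.hasFDerivAt
    have h2 := hg.comp_hasDerivAt t (aux_fst h)
    refine (h1.add h2).congr_deriv ?_
    simp [hamVF, inner_smul_right, real_inner_comm]
  have := is_const_of_deriv_eq_zero (fun t => (hd t).differentiableAt) (fun t => (hd t).deriv) t 0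
  simpa [hΦ.1] using this

lemma aux_line {R : ℝ} (hR : ∀ x, R < ‖x‖ → gradient V x = 0)
    (hV : ContDiff ℝ (⊤ : ℕ∞) V) (hs : HasCompactSupport V)
    (hΦ : IsHamFlow V Φ) (ρ : Phase n) (h1 : R < ‖ρ.1‖) (h2 : 0 < ⟪ρ.1, ρ.2⟫)
    {t : ℝ} (ht : 0 ≤ t) :
    Φ t ρ = (ρ.1 + (2 * t) • ρ.2, ρ.2) ∧ ‖ρ.1‖ ≤ ‖(Φ t ρ).1‖ := by
  obtain ⟨K, hK⟩ := aux_lip hV hs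
  have hn : ∀ s : ℝ, 0 ≤ s → ‖ρ.1‖ ≤ ‖ρ.1 + (2 * s) • ρ.2‖ := by
    intro s hs
    refine le_of_sq_le_sq ?_ (norm_nonneg _)
    rw [norm_add_sq_real, inner_smul_right]
    have := mul_nonneg hs h2.le
    nlinarith [sq_nonneg ‖(2 * s) • ρ.2‖]
  have hd := hΦ.2.2 ρ
  have hg : ∀ s : ℝ, HasDerivAt (fun s : ℝ => ((ρ.1 + (2 * s) • ρ.2, ρ.2) : Phase n))
      ((2 : ℝ) • ρ.2, 0) s := by
    intro s
    have ha : HasDerivAt (fun s : ℝ => 2 * s) 2 s := by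
      simpa using (hasDerivAt_id s).const_mul 2
    exact ((ha.smul_const ρ.2).const_add ρ.1).prodMk (hasDerivAt_const s ρ.2)
  have key := ODE_solution_unique (v := fun _ => hamVF V) (K := K)
      (f := fun s => Φ s ρ) (g := fun s : ℝ => ((ρ.1 + (2 * s) • ρ.2, ρ.2) : Phase n))
      (a := 0) (b := t)
      (fun _ => hK) (fun s _ => (hd s).continuousAt.continuousWithinAt)
      (fun s _ => (hd s).hasDerivWithinAt)
      (fun s _ => (hg s).continuousAt.continuousWithinAt)
      (fun s hs => by
        have : hamVF V (ρ.1 + (2 * s) • ρ.2, ρ.2) = ((2 : ℝ) • ρ.2, 0) := by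
          simp [hamVF, hR _ (h1.trans_le (hn s hs.1))]
        rw [this]
        exact (hg s).hasDerivWithinAt) (by simp [hΦ.1])
  have e := key ⟨ht, le_rfl⟩
  simp only at e
  rw [e]
  exact ⟨rfl, hn t ht⟩

lemma aux_escape_s11 {R : ℝ} (hR : ∀ x, R < ‖x‖ → gradient V x = 0)
    (hV : ContDiff ℝ (⊤ : ℕ∞) V) (hs : HasCompactSupport V)
    (hΦ : IsHamFlow V Φ) (ρ : Phase n) (h1 : R < ‖ρ.1‖) (h2 : 0 < ⟪ρ.1, ρ.2⟫) :
    Tendsto (fun t => ‖Φ t ρ‖) atTop atTop := by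
  have hne : 0 < ‖ρ.2‖ := by
    rw [norm_pos_iff]; rintro h; simp [h] at h2
  have hl : Tendsto (fun t : ℝ => t * (2 * ‖ρ.2‖) + (- ‖ρ.1‖)) atTop atTop :=
    tendsto_atTop_add_const_right _ _ (tendsto_id.atTop_mul_const (by positivity))
  refine tendsto_atTop_mono' _ ?_ hl
  filter_upwards [eventually_ge_atTop 0] with t ht
  rw [(aux_line hR hV hs hΦ ρ h1 h2 ht).1]
  refine le_trans ?_ (norm_fst_le _)
  have := norm_sub_le (ρ.1 + (2 * t) • ρ.2) ρ.1
  rw [add_sub_cancel_left, norm_smul, Real.norm_of_nonneg (by positivity)] at this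
  simp only
  linarith

lemma aux_conv (hV : ContDiff ℝ (⊤ : ℕ∞) V) (hs : HasCompactSupport V)
    (hΦ : IsHamFlow V Φ) (ρ : Phase n) (h : Tendsto (fun t => ‖Φ t ρ‖) atTop atTop) (R : ℝ) :
    ∃ T, 0 ≤ T ∧ R < ‖(Φ T ρ).1‖ ∧ 0 < ⟪(Φ T ρ).1, (Φ T ρ).2⟫ := by
  obtain ⟨C, hC⟩ := hs.exists_bound_of_continuous hV.continuous
  set D := Real.sqrt (ham V ρ + C) with hD
  have hξ : ∀ t, ‖(Φ t ρ).2‖ ≤ D := by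
    intro t
    apply Real.le_sqrt_of_sq_le
    have h1 := aux_energy hV hΦ ρ t
    have h2 := (abs_le.mp (hC (Φ t ρ).1)).1
    unfold ham at h1 ⊢
    linarith
  have hx : ∀ M : ℝ, ∀ᶠ t in atTop, M < ‖(Φ t ρ).1‖ := by
    intro M
    filter_upwards [h.eventually_gt_atTop (max M D)] with t ht
    rw [Prod.norm_def] at ht
    have := hξ t
    have h3 := le_max_left M D
    have h4 := le_max_right M D
    rcases lt_max_iff.mp ht with h5 | h5 <;> linarith
  obtain ⟨T0, hT0⟩ := eventually_atTop.mp ((hx R).and (eventually_ge_atTop 0))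
  by_contra hcon
  push Not at hcon
  have hd : ∀ t, HasDerivAt (fun t => ‖(Φ t ρ).1‖ ^ 2) (4 * ⟪(Φ t ρ).1, (Φ t ρ).2⟫) t := by
    intro t
    refine (aux_fst (hΦ.2.2 ρ t)).norm_sq.congr_deriv ?_
    simp [hamVF, inner_smul_right]
    ring
  have hanti : AntitoneOn (fun t => ‖(Φ t ρ).1‖ ^ 2) (Ici T0) := by
    refine antitoneOn_of_deriv_nonpos (convex_Ici _)
      (fun t _ => (hd t).continuousAt.continuousWithinAt)
      (fun t _ => (hd t).differentiableAt.differentiableWithinAt) ?_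
    intro t ht
    rw [interior_Ici] at ht
    rw [(hd t).deriv]
    have h1 := hT0 t (le_of_lt ht)
    have := hcon t h1.2 h1.1
    linarith
  obtain ⟨t, ht, ht'⟩ := ((hx ‖(Φ T0 ρ).1‖).and (eventually_ge_atTop T0)).exists
  have h1 : ‖(Φ t ρ).1‖ ^ 2 ≤ ‖(Φ T0 ρ).1‖ ^ 2 := hanti self_mem_Ici ht' ht'
  have h2 := pow_le_pow_iff_left₀ (norm_nonneg _) (norm_nonneg _) two_ne_zero |>.mp h1
  linarith

lemma aux_open (R : ℝ) : IsOpen {ρ : Phase n | R < ‖ρ.1‖ ∧ 0 < ⟪ρ.1, ρ.2⟫} := by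
  have h1 : Continuous fun ρ : Phase n => ‖ρ.1‖ := by fun_prop
  have h2 : Continuous fun ρ : Phase n => ⟪ρ.1, ρ.2⟫ := by fun_prop
  exact (isOpen_lt continuous_const h1).inter (isOpen_lt continuous_const h2)

lemma aux_bot (ρ : Phase n) : Tendsto (fun t => ‖Φ t ρ‖) atBot atTop ↔
    Tendsto (fun t => ‖auxRev Φ t (auxFlip ρ)‖) atTop atTop := by
  simp only [auxRev, auxFlip_flip, auxFlip_norm]
  constructor
  · intro h; exact h.comp tendsto_neg_atTop_atBot
  · intro h
    have := h.comp tendsto_neg_atBot_atTop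
    simpa [Function.comp_def] using this

lemma aux_main (hV : ContDiff ℝ (⊤ : ℕ∞) V) (hs : HasCompactSupport V)
    (hΦ : IsHamFlow V Φ) {E : ℝ} {ρ : Phase n} (hρ : ρ ∈ GammaMinus V Φ E) :
    (trappedSet V Φ E).Nonempty := by
  obtain ⟨R, hR⟩ := aux_R hs
  obtain ⟨hE, hnt⟩ := hρ
  have hΨ := auxRev_flow hΦ
  obtain ⟨C, hC⟩ : ∃ C, ∃ᶠ t in atTop, ‖Φ t ρ‖ ≤ C := by
    rw [tendsto_atTop] at hnt
    push Not at hnt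
    obtain ⟨C, hC⟩ := hnt
    exact ⟨C, hC.mono fun t ht => le_of_lt (by simpa using ht)⟩
  obtain ⟨a, -, ha⟩ := (isCompact_closedBall (0 : Phase n) C).exists_mapClusterPt_of_frequently
    (f := fun t => Φ t ρ) (l := atTop) (hC.mono fun t ht => by simpa using ht)
  have hfr : ∀ U : Set (Phase n), IsOpen U → a ∈ U → ∃ᶠ t in atTop, Φ t ρ ∈ U :=
    fun U hU haU => ha.frequently (hU.mem_nhds haU)
  have haE : ham V a = E := by
    by_contra hne
    have hc : Continuous (ham V) := by
      have := hV.continuous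
      unfold ham; fun_prop
    obtain ⟨t, ht⟩ := (hfr {b | ham V b ≠ E} (isOpen_ne_fun hc continuous_const) hne).exists
    exact ht ((aux_energy hV hΦ ρ t).trans hE)
  refine ⟨a, ⟨haE, fun h => ?_⟩, ⟨haE, fun h => ?_⟩⟩
  · obtain ⟨T, hT0, hT⟩ := aux_conv hV hs hΦ a h R
    obtain ⟨t, ht⟩ := (hfr _ ((aux_open R).preimage (aux_cont hV hs hΦ hT0)) hT).exists
    have := aux_escape_s11 hR hV hs hΦ _ ht.1 ht.2
    apply hnt
    have h2 := this.comp (tendsto_atTop_add_const_right atTop (-(T + t)) tendsto_id)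
    refine h2.congr fun s => ?_
    simp only [Function.comp, id]
    rw [← hΦ.2.1, ← hΦ.2.1]
    congr 2
    ring
  · rw [aux_bot] at h
    obtain ⟨T, hT0, hT⟩ := aux_conv hV hs hΨ _ h (max R ‖ρ.1‖)
    obtain ⟨t, ht, htT⟩ := ((hfr _ ((aux_open _).preimage
      ((aux_cont hV hs hΨ hT0).comp auxFlip_cont)) hT).and_eventually
        (eventually_ge_atTop T)).exists
    have hb := (aux_line hR hV hs hΨ _ ((le_max_left _ _).trans_lt ht.1) ht.2
      (sub_nonneg.mpr htT)).2
    have e : auxRev Φ (t - T) ((auxRev Φ T ∘ auxFlip) (Φ t ρ)) = auxFlip ρ := by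
      simp only [auxRev, Function.comp, auxFlip_flip]
      rw [← hΦ.2.1, ← hΦ.2.1]
      have : -(t - T) + (-T + t) = 0 := by ring
      first | rw [this, hΦ.1] | (rw [show -(t - T) + -T + t = 0 by ring, hΦ.1])
    rw [e] at hb
    have h1 := ht.1
    have h2 := le_max_right R ‖ρ.1‖
    have h3 : ‖(auxFlip ρ).1‖ = ‖ρ.1‖ := rfl
    linarith

end helpers

/-- Non-trapping consistency: if the trapped set is empty then both tails are
empty. -/
theorem nontrapping_consistency (n : ℕ) (hn : 1 ≤ n)
    (V : EuclideanSpace ℝ (Fin n) → ℝ) (hV : ContDiff ℝ (⊤ : ℕ∞) V)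
    (hVsupp : HasCompactSupport V)
    (Φ : ℝ → Phase n → Phase n) (hΦ : IsHamFlow V Φ)
    (E : ℝ) (hE : 0 < E) (hK : trappedSet V Φ E = ∅) :
    GammaMinus V Φ E = ∅ ∧ GammaPlus V Φ E = ∅ := by
  have hmain : GammaMinus V Φ E = ∅ := by
    rw [eq_empty_iff_forall_notMem]
    intro ρ hρ
    exact (aux_main hV hVsupp hΦ hρ).ne_empty hK
  refine ⟨hmain, ?_⟩
  rw [eq_empty_iff_forall_notMem]
  intro ρ hρ
  have hρ' : auxFlip ρ ∈ GammaMinus V (auxRev Φ) E :=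
    ⟨(auxFlip_ham ρ).trans hρ.1, fun h => hρ.2 ((aux_bot ρ).mpr h)⟩
  obtain ⟨a, ha, ha'⟩ := aux_main hV hVsupp (auxRev_flow hΦ) hρ'
  have hrr : auxRev (auxRev Φ) = Φ := by
    funext t b
    simp [auxRev, auxFlip_flip]
  have : auxFlip a ∈ GammaMinus V Φ E := by
    refine ⟨(auxFlip_ham a).trans ha.1, fun h => ha'.2 ?_⟩
    rw [aux_bot, hrr]
    exact h
  rw [hmain] at this
  exact this
end
end
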